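/- arXiv:1901.04738 — 7 statements merged into one kernel-verified Lean document; each statement's English description precedes it below -/
import Mathlib

section
/- Let a, b, d, e, f ∈ ℝ² satisfy f − e = s·(b − a) for some real s with 0 ≤ s ≤ 1, and d = (1 − t)·e + t·f for some real t with 0 ≤ t ≤ 1. Then the sum of the 2-dimensional Lebesgue measures of the triangles conv{a, d, e} and conv{b, d, f} is at most the 2-dimensional Lebesgue measure of the triangle conv{a, b, d}. -/
open MeasureTheory
open scoped Pointwise

/-!
Every triangle is the affine image of the standard one, so its area is a fixed constant times
the absolute value of the determinant of two edge vectors (`volume_triangle`). Since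
`d - e = t s (b - a)` and `f - d = (1 - t) s (b - a)`, the determinants of the triangles `ade` and
`bdf` are, up to sign, `t s` and `(1 - t) s` times that of `abd`. The two areas therefore add up
to `s` times the area of `abd`, and `s ≤ 1`.
-/

/-- The area of a triangle in terms of the determinant of its edge vectors at `p`. The volume of
the standard triangle is left unevaluated, as only ratios of areas matter. -/
lemma volume_triangle (p q r : Fin 2 → ℝ) :
    volume (convexHull ℝ {p, q, r}) =
      ENNReal.ofReal |(q 0 - p 0) * (r 1 - p 1) - (r 0 - p 0) * (q 1 - p 1)| *
        volume (convexHull ℝ {(0 : Fin 2 → ℝ), ![1, 0], ![0, 1]}) := by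
  let M : Matrix (Fin 2) (Fin 2) ℝ := !![q 0 - p 0, r 0 - p 0; q 1 - p 1, r 1 - p 1]
  have hq : M.toLin' ![1, 0] = q - p := by
    ext i; fin_cases i <;> simp [M, Matrix.mulVec, dotProduct]
  have hr : M.toLin' ![0, 1] = r - p := by
    ext i; fin_cases i <;> simp [M, Matrix.mulVec, dotProduct]
  have hset : convexHull ℝ {p, q, r} =
      p +ᵥ (M.toLin' '' convexHull ℝ {(0 : Fin 2 → ℝ), ![1, 0], ![0, 1]}) := by
    rw [LinearMap.image_convexHull, ← convexHull_vadd]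
    simp only [Set.image_insert_eq, Set.image_singleton, hq, hr, map_zero, Set.vadd_set_insert,
      Set.vadd_set_singleton, vadd_eq_add, add_zero, add_sub_cancel]
  rw [hset, measure_vadd, Measure.addHaar_image_linearMap, LinearMap.det_toLin',
    Matrix.det_fin_two_of]

/-- If `f − e = s·(b − a)` with `0 ≤ s ≤ 1` and `d` lies on the segment `ef`, then the
sum of the areas of the triangles `conv{a,d,e}` and `conv{b,d,f}` is at most the area of
the triangle `conv{a,b,d}`. -/
theorem stmt_1 (a b d e f : Fin 2 → ℝ) (s t : ℝ)
    (hs0 : 0 ≤ s) (hs1 : s ≤ 1) (hef : f - e = s • (b - a))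
    (ht0 : 0 ≤ t) (ht1 : t ≤ 1) (hd : d = (1 - t) • e + t • f) :
    volume (convexHull ℝ {a, d, e}) + volume (convexHull ℝ {b, d, f}) ≤
      volume (convexHull ℝ {a, b, d}) := by
  have hf : ∀ i, f i = e i + s * (b i - a i) := fun i => by
    have := congrFun hef i
    simp only [Pi.sub_apply, Pi.smul_apply, smul_eq_mul] at this
    linarith
  have hd' : ∀ i, d i = e i + t * s * (b i - a i) := fun i => by
    have := congrFun hd i
    simp only [Pi.add_apply, Pi.smul_apply, smul_eq_mul, hf] at this
    linarith
  rw [volume_triangle a d e, volume_triangle b d f, volume_triangle a b d, ← add_mul,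
    ← ENNReal.ofReal_add (abs_nonneg _) (abs_nonneg _)]
  gcongr
  set D := (b 0 - a 0) * (d 1 - a 1) - (d 0 - a 0) * (b 1 - a 1) with hD
  have h1 : (d 0 - a 0) * (e 1 - a 1) - (e 0 - a 0) * (d 1 - a 1) = t * s * D := by
    simp only [hD, hd']; ring
  have h2 : (d 0 - b 0) * (f 1 - b 1) - (f 0 - b 0) * (d 1 - b 1) = -((1 - t) * s * D) := by
    simp only [hD, hd', hf]; ring
  rw [h1, h2, abs_neg, abs_mul, abs_mul _ D, abs_of_nonneg (mul_nonneg ht0 hs0),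
    abs_of_nonneg (mul_nonneg (sub_nonneg.2 ht1) hs0)]
  nlinarith [abs_nonneg D]
end

section
/- Let a, b, d, e, f ∈ ℝ² satisfy f − e = s·(b − a) for some real s with 0 ≤ s ≤ 1, and d = (1 − t)·e + t·f for some real t with 0 ≤ t ≤ 1. Then the reflected triangles conv{a, d, a + d − e} and conv{b, d, b + d − f} are both contained in the triangle conv{a, b, d}. -/
/-!
Since `d - e = t • (f - e) = (t * s) • (b - a)` and `d - f = -((1 - t) * s) • (b - a)`, both
reflected apexes `a + d - e` and `b + d - f` lie on the segment `ab`. Hence all vertices of the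
reflected triangles lie in `conv{a, b, d}`, and so do the triangles.
-/

/-- If `f − e = s·(b − a)` with `0 ≤ s ≤ 1` and `d` lies on the segment `ef`, then the
reflected triangles `conv{a, d, a+d−e}` and `conv{b, d, b+d−f}` are both contained in the
triangle `conv{a, b, d}`. -/
theorem stmt_2 (a b d e f : Fin 2 → ℝ) (s t : ℝ)
    (hs0 : 0 ≤ s) (hs1 : s ≤ 1) (hef : f - e = s • (b - a))
    (ht0 : 0 ≤ t) (ht1 : t ≤ 1) (hd : d = (1 - t) • e + t • f) :
    convexHull ℝ {a, d, a + d - e} ⊆ convexHull ℝ {a, b, d} ∧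
    convexHull ℝ {b, d, b + d - f} ⊆ convexHull ℝ {a, b, d} := by
  have hconv : Convex ℝ (convexHull ℝ {a, b, d}) := convex_convexHull ℝ _
  have ha : a ∈ convexHull ℝ {a, b, d} := subset_convexHull ℝ _ (by simp)
  have hb : b ∈ convexHull ℝ {a, b, d} := subset_convexHull ℝ _ (by simp)
  have hd' : d ∈ convexHull ℝ {a, b, d} := subset_convexHull ℝ _ (by simp)
  have hf : f = e + s • (b - a) := by rw [← hef]; abel
  have h1 : a + d - e = a + (t * s) • (b - a) := by
    rw [hd, hf]; module
  have h2 : b + d - f = b + ((1 - t) * s) • (a - b) := by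
    rw [hd, hf]; module
  constructor
  · refine convexHull_min ?_ hconv
    rintro x (rfl | rfl | rfl)
    · exact ha
    · exact hd'
    · rw [h1]
      exact hconv.add_smul_sub_mem ha hb ⟨by positivity, mul_le_one₀ ht1 hs0 hs1⟩
  · refine convexHull_min ?_ hconv
    rintro x (rfl | rfl | rfl)
    · exact hb
    · exact hd'
    · rw [h2]
      exact hconv.add_smul_sub_mem hb ha
        ⟨mul_nonneg (by linarith) hs0, mul_le_one₀ (by linarith) hs0 hs1⟩
end

section
/- Let a, b, d, e, f ∈ ℝ² satisfy f − e = s·(b − a) for some real s with 0 ≤ s ≤ 1, and d = (1 − t)·e + t·f for some real t with 0 ≤ t ≤ 1. Then the topological interiors of the two reflected triangles conv{a, d, a + d − e} and conv{b, d, b + d − f} are disjoint. -/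
/-!
Put `d` at the origin and `u = b - a`. Then `e = -(t s) u` and `f = ((1 - t) s) u`, so the two
triangles have apex `d` and opposite sides `[a, a + t s u]` and `[b - (1 - t) s u, b]`. Both sides
lie on the line `ab` and, since `t s + (1 - t) s = s ≤ 1`, they do not overlap. Hence the line
through `d` in direction `a - e` separates the triangles: the functional `det (a - e, ·)` is at most
its value at `d` on one and at least this value on the other (`le_of_mem_hull_triple`).

On the open intersection of the interiors this functional is therefore constant, and a linear
functional constant on a nonempty open set vanishes (`coeff_eq_zero_of_isOpen`), so `a = e`. The
first triangle is then the segment `[a, d]`, which lies in a line; the same lemma gives `a = d`,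
and a single point has empty interior.
-/

/-- A half-plane containing the three vertices contains the triangle. -/
lemma le_of_mem_hull_triple {p q r x : Fin 2 → ℝ} {c₀ c₁ k : ℝ}
    (hp : c₀ * p 0 + c₁ * p 1 ≤ k) (hq : c₀ * q 0 + c₁ * q 1 ≤ k)
    (hr : c₀ * r 0 + c₁ * r 1 ≤ k) (hx : x ∈ convexHull ℝ {p, q, r}) :
    c₀ * x 0 + c₁ * x 1 ≤ k := by
  have hconv : Convex ℝ {y : Fin 2 → ℝ | c₀ * y 0 + c₁ * y 1 ≤ k} := by
    intro y hy z hz m n hm hn hmn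
    simp only [Set.mem_ofPred_eq, Pi.add_apply, Pi.smul_apply, smul_eq_mul] at *
    have hk : k = m * k + n * k := by rw [← add_mul, hmn, one_mul]
    have h1 := mul_le_mul_of_nonneg_left hy hm
    have h2 := mul_le_mul_of_nonneg_left hz hn
    linarith
  refine convexHull_min ?_ hconv hx
  rintro y (rfl | rfl | rfl) <;> assumption

lemma coeff_eq_zero_of_isOpen {U : Set (Fin 2 → ℝ)} (hU : IsOpen U) {x : Fin 2 → ℝ}
    (hx : x ∈ U) {c₀ c₁ k : ℝ} (h : ∀ y ∈ U, c₀ * y 0 + c₁ * y 1 = k) :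
    c₀ = 0 ∧ c₁ = 0 := by
  -- Moving from `x` by `ε` times the coefficient vector changes the value by `ε (c₀² + c₁²)`.
  have hcont : Continuous fun ε : ℝ => x + ε • ![c₀, c₁] := by fun_prop
  have hev : ∀ᶠ ε in nhds (0 : ℝ), x + ε • ![c₀, c₁] ∈ U :=
    hcont.continuousAt.eventually_mem (hU.mem_nhds (by simpa using hx))
  obtain ⟨δ, hδ, hball⟩ := Metric.eventually_nhds_iff.1 hev
  have hmem : x + (δ / 2) • ![c₀, c₁] ∈ U := by
    apply hball
    rw [Real.dist_eq, sub_zero, abs_of_pos (by linarith)]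
    linarith
  have h1 := h _ hmem
  have h2 := h _ hx
  simp only [Pi.add_apply, Pi.smul_apply, smul_eq_mul, Matrix.cons_val_zero,
    Matrix.cons_val_one] at h1
  have h3 : δ / 2 * (c₀ ^ 2 + c₁ ^ 2) = 0 := by linarith
  have h4 : c₀ ^ 2 + c₁ ^ 2 = 0 := (mul_eq_zero.1 h3).resolve_left (by linarith)
  constructor <;> nlinarith [sq_nonneg c₀, sq_nonneg c₁]

/-- If `f − e = s·(b − a)` with `0 ≤ s ≤ 1` and `d` lies on the segment `ef`, then the
topological interiors of the reflected triangles `conv{a, d, a+d−e}` and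
`conv{b, d, b+d−f}` are disjoint. -/
theorem stmt_3 (a b d e f : Fin 2 → ℝ) (s t : ℝ)
    (hs0 : 0 ≤ s) (hs1 : s ≤ 1) (hef : f - e = s • (b - a))
    (ht0 : 0 ≤ t) (ht1 : t ≤ 1) (hd : d = (1 - t) • e + t • f) :
    Disjoint (interior (convexHull ℝ {a, d, a + d - e}))
      (interior (convexHull ℝ {b, d, b + d - f})) := by
  rw [Set.disjoint_left]
  intro x hx1 hx2
  have hUo := (isOpen_interior (s := convexHull ℝ {a, d, a + d - e})).inter
    (isOpen_interior (s := convexHull ℝ {b, d, b + d - f}))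
  have hxU := Set.mem_inter hx1 hx2
  have hf : ∀ i, f i = e i + s * (b i - a i) := fun i => by
    have := congrFun hef i
    simp only [Pi.sub_apply, Pi.smul_apply, smul_eq_mul] at this
    linarith
  have he : ∀ i, e i = d i - t * s * (b i - a i) := fun i => by
    have := congrFun hd i
    simp only [Pi.add_apply, Pi.smul_apply, smul_eq_mul, hf] at this
    linarith
  -- Signs of the coefficients of `D` in the vertex values below.
  have hα : 0 ≤ t * s := mul_nonneg ht0 hs0
  have hβ : 0 ≤ 1 - t * s := by nlinarith
  have hγ : 0 ≤ 1 - s := by linarith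
  obtain ⟨D, hD⟩ : ∃ D, D = (a 0 - d 0) * (b 1 - a 1) - (a 1 - d 1) * (b 0 - a 0) := ⟨_, rfl⟩
  -- Values of `det (a - e, · - d)` at the vertices other than `d`, in terms of
  -- `D = det (a - d, b - a)`; it vanishes at `a + d - e`.
  have va : -(a 1 - e 1) * a 0 + (a 0 - e 0) * a 1
      = -(a 1 - e 1) * d 0 + (a 0 - e 0) * d 1 - t * s * D := by
    rw [he, he, hD]; ring
  have vp : -(a 1 - e 1) * (a + d - e) 0 + (a 0 - e 0) * (a + d - e) 1
      = -(a 1 - e 1) * d 0 + (a 0 - e 0) * d 1 := by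
    simp only [Pi.sub_apply, Pi.add_apply]; ring
  have vb : -(a 1 - e 1) * b 0 + (a 0 - e 0) * b 1
      = -(a 1 - e 1) * d 0 + (a 0 - e 0) * d 1 + (1 - t * s) * D := by
    rw [he, he, hD]; ring
  have vq : -(a 1 - e 1) * (b + d - f) 0 + (a 0 - e 0) * (b + d - f) 1
      = -(a 1 - e 1) * d 0 + (a 0 - e 0) * d 1 + (1 - s) * D := by
    simp only [Pi.sub_apply, Pi.add_apply, hf]; rw [he, he, hD]; ring
  have key : ∀ y ∈ interior (convexHull ℝ {a, d, a + d - e}) ∩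
      interior (convexHull ℝ {b, d, b + d - f}),
      -(a 1 - e 1) * y 0 + (a 0 - e 0) * y 1 = -(a 1 - e 1) * d 0 + (a 0 - e 0) * d 1 := by
    rintro y ⟨hy1, hy2⟩
    have hy1 := interior_subset hy1
    have hy2 := interior_subset hy2
    rcases le_total 0 D with h | h
    · have m1 := mul_nonneg hα h
      have m2 := mul_nonneg hβ h
      have m3 := mul_nonneg hγ h
      have h1 := le_of_mem_hull_triple (c₀ := -(a 1 - e 1)) (c₁ := a 0 - e 0)
        (k := -(a 1 - e 1) * d 0 + (a 0 - e 0) * d 1)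
        (by linarith) (by linarith) (by linarith) hy1
      have h2 := le_of_mem_hull_triple (c₀ := a 1 - e 1) (c₁ := -(a 0 - e 0))
        (k := -(-(a 1 - e 1) * d 0 + (a 0 - e 0) * d 1))
        (by linarith) (by linarith) (by linarith) hy2
      linarith
    · have m1 := mul_nonpos_of_nonneg_of_nonpos hα h
      have m2 := mul_nonpos_of_nonneg_of_nonpos hβ h
      have m3 := mul_nonpos_of_nonneg_of_nonpos hγ h
      have h1 := le_of_mem_hull_triple (c₀ := a 1 - e 1) (c₁ := -(a 0 - e 0))
        (k := -(-(a 1 - e 1) * d 0 + (a 0 - e 0) * d 1))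
        (by linarith) (by linarith) (by linarith) hy1
      have h2 := le_of_mem_hull_triple (c₀ := -(a 1 - e 1)) (c₁ := a 0 - e 0)
        (k := -(a 1 - e 1) * d 0 + (a 0 - e 0) * d 1)
        (by linarith) (by linarith) (by linarith) hy2
      linarith
  obtain ⟨z1, z0⟩ := coeff_eq_zero_of_isOpen hUo hxU key
  have hae : a = e := by
    funext i
    fin_cases i
    · simpa using sub_eq_zero.1 z0
    · simpa using sub_eq_zero.1 (neg_eq_zero.1 z1)
  subst hae
  rw [add_sub_cancel_left] at hx1
  -- Now the first triangle is the segment `[a, d]`, on which `det (a - d, ·)` is constant.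
  obtain ⟨w1, w0⟩ := coeff_eq_zero_of_isOpen isOpen_interior hx1
    (c₀ := -(a 1 - d 1)) (c₁ := a 0 - d 0) (k := -(a 1 - d 1) * d 0 + (a 0 - d 0) * d 1)
    (fun y hy => by
      have hy := interior_subset hy
      have h1 := le_of_mem_hull_triple (c₀ := -(a 1 - d 1)) (c₁ := a 0 - d 0)
        (k := -(a 1 - d 1) * d 0 + (a 0 - d 0) * d 1)
        (by linarith) (by linarith) (by linarith) hy
      have h2 := le_of_mem_hull_triple (c₀ := a 1 - d 1) (c₁ := -(a 0 - d 0))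
        (k := -(-(a 1 - d 1) * d 0 + (a 0 - d 0) * d 1))
        (by linarith) (by linarith) (by linarith) hy
      linarith)
  -- Now `a = d`, so even the first coordinate is constant on the triangle.
  have := coeff_eq_zero_of_isOpen isOpen_interior hx1 (c₀ := 1) (c₁ := 0) (k := d 0)
    (fun y hy => by
      have hy := interior_subset hy
      have h1 := le_of_mem_hull_triple (c₀ := 1) (c₁ := 0) (k := d 0)
        (by linarith) (by linarith) (by linarith) hy
      have h2 := le_of_mem_hull_triple (c₀ := -1) (c₁ := 0) (k := -d 0)
        (by linarith) (by linarith) (by linarith) hy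
      linarith)
  exact one_ne_zero this.1
end

section
/- Let a, b, d ∈ ℤ² and e, f ∈ ℝ² satisfy f − e = s·(b − a) for some real s with 0 ≤ s ≤ 1, and d = (1 − t)·e + t·f for some real t with 0 ≤ t ≤ 1. Then the number of lattice points in the triangle conv{a, d, e} is at most the number of lattice points in the triangle conv{a, b, d}, and likewise the number of lattice points in conv{b, d, f} is at most the number of lattice points in conv{a, b, d}. -/
/-!
Since `e = d - ts (b - a)` and `0 ≤ ts ≤ 1`, the point reflection `x ↦ a + d - x`, which preserves
the lattice, swaps `a` and `d` and sends `e` to a point of the segment `ab`. Hence it maps the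
triangle `ade` into the triangle `abd`, and it injects the lattice points of the former
into the finite set of lattice points of the latter (`ncard_triangle_le`). The second inequality is
the first one with the roles of `a` and `b` exchanged, as `f = d - (1 - t)s (a - b)`.
-/

/-- The canonical embedding of lattice points `ℤ²` into `ℝ²`. -/
def latticeEmb : (Fin 2 → ℤ) → (Fin 2 → ℝ) := fun v i => (v i : ℝ)

lemma finite_lattice_of_isBounded {K : Set (Fin 2 → ℝ)} (hK : Bornology.IsBounded K) :
    {x : Fin 2 → ℤ | latticeEmb x ∈ K}.Finite := by
  obtain ⟨R, hR⟩ := hK.exists_norm_le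
  refine (Set.finite_Icc (fun _ : Fin 2 => -⌈R⌉) (fun _ => ⌈R⌉)).subset fun x hx => ?_
  have h : ∀ i, |(x i : ℝ)| ≤ ⌈R⌉ := fun i =>
    ((norm_le_pi_norm (latticeEmb x) i).trans (hR _ hx)).trans (Int.le_ceil R)
  have h' : ∀ i, |x i| ≤ ⌈R⌉ := fun i => by exact_mod_cast h i
  exact ⟨fun i => (abs_le.mp (h' i)).1, fun i => (abs_le.mp (h' i)).2⟩

/-- The lattice points of `conv{a, d, e}` are sent into `conv{a, b, d}` by `x ↦ a + d - x`
when `d - e` is a multiple `u (b - a)` with `0 ≤ u ≤ 1`. -/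
lemma ncard_triangle_le (a b d : Fin 2 → ℤ) (e : Fin 2 → ℝ) (u : ℝ) (hu0 : 0 ≤ u) (hu1 : u ≤ 1)
    (he : e = latticeEmb d - u • (latticeEmb b - latticeEmb a)) :
    {x : Fin 2 → ℤ | latticeEmb x ∈ convexHull ℝ {latticeEmb a, latticeEmb d, e}}.ncard ≤
      {x : Fin 2 → ℤ |
        latticeEmb x ∈ convexHull ℝ {latticeEmb a, latticeEmb b, latticeEmb d}}.ncard := by
  set K := convexHull ℝ {latticeEmb a, latticeEmb b, latticeEmb d} with hK
  have hKc : Convex ℝ K := convex_convexHull ℝ _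
  have ha : latticeEmb a ∈ K := subset_convexHull ℝ _ (by simp)
  have hb : latticeEmb b ∈ K := subset_convexHull ℝ _ (by simp)
  have hd : latticeEmb d ∈ K := subset_convexHull ℝ _ (by simp)
  have hconv : Convex ℝ {y | latticeEmb a + latticeEmb d - y ∈ K} := by
    intro y hy z hz p q hp hq hpq
    have := hKc hy hz hp hq hpq
    have heq : latticeEmb a + latticeEmb d - (p • y + q • z) =
        p • (latticeEmb a + latticeEmb d - y) + q • (latticeEmb a + latticeEmb d - z) := by
      obtain rfl : q = 1 - p := by linarith
      module
    simpa only [Set.mem_ofPred_eq, heq] using this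
  have hsub : convexHull ℝ {latticeEmb a, latticeEmb d, e} ⊆
      {y | latticeEmb a + latticeEmb d - y ∈ K} := by
    refine convexHull_min ?_ hconv
    rintro y (rfl | rfl | rfl)
    · simpa using hd
    · simpa using ha
    · have := hKc ha hb (sub_nonneg.mpr hu1) hu0 (by ring)
      have heq : latticeEmb a + latticeEmb d - y =
          (1 - u) • latticeEmb a + u • latticeEmb b := by
        rw [he]; module
      simpa only [Set.mem_ofPred_eq, heq] using this
  refine Set.ncard_le_ncard_of_injOn (fun x => a + d - x) (fun x hx => ?_)
    (fun x _ y _ h => sub_right_injective h) ?_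
  · have heq : latticeEmb (a + d - x) = latticeEmb a + latticeEmb d - latticeEmb x := by
      ext i; simp [latticeEmb]
    simpa only [Set.mem_ofPred_eq, heq] using hsub hx
  · exact finite_lattice_of_isBounded
      (isBounded_convexHull.mpr (Set.toFinite _).isBounded)

/-- Let `a, b, d ∈ ℤ²` and `e, f ∈ ℝ²` with `f − e = s·(b − a)` for some `0 ≤ s ≤ 1` and
`d = (1−t)·e + t·f` for some `0 ≤ t ≤ 1`. Then the number of lattice points in the triangle
`conv{a, d, e}` is at most the number of lattice points in the triangle `conv{a, b, d}`,
and likewise for `conv{b, d, f}`. -/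
theorem stmt_5 (a b d : Fin 2 → ℤ) (e f : Fin 2 → ℝ) (s t : ℝ)
    (hs0 : 0 ≤ s) (hs1 : s ≤ 1) (hef : f - e = s • (latticeEmb b - latticeEmb a))
    (ht0 : 0 ≤ t) (ht1 : t ≤ 1) (hd : latticeEmb d = (1 - t) • e + t • f) :
    {x : Fin 2 → ℤ | latticeEmb x ∈ convexHull ℝ {latticeEmb a, latticeEmb d, e}}.ncard ≤
      {x : Fin 2 → ℤ |
        latticeEmb x ∈ convexHull ℝ {latticeEmb a, latticeEmb b, latticeEmb d}}.ncard ∧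
    {x : Fin 2 → ℤ | latticeEmb x ∈ convexHull ℝ {latticeEmb b, latticeEmb d, f}}.ncard ≤
      {x : Fin 2 → ℤ |
        latticeEmb x ∈ convexHull ℝ {latticeEmb a, latticeEmb b, latticeEmb d}}.ncard := by
  have hf : f = e + s • (latticeEmb b - latticeEmb a) := by rw [← hef]; abel
  constructor
  · refine ncard_triangle_le a b d e (t * s) (by positivity) (by nlinarith) ?_
    rw [hd, hf]; module
  · rw [Set.insert_comm (latticeEmb a)]
    refine ncard_triangle_le b a d f ((1 - t) * s)
      (mul_nonneg (by linarith) hs0) (by nlinarith) ?_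
    rw [hd, hf]; module
end

section
/- Let a, b, d ∈ ℤ² be affinely independent and let e, f ∈ ℝ² satisfy f − e = s·(b − a) for some real s with 0 ≤ s < 1, and d = (1 − t)·e + t·f for some real t with 0 ≤ t ≤ 1. Then the number of lattice points lying in conv{a, d, e} but not on the segment [a, d], plus the number of lattice points lying in conv{b, d, f} but not on the segment [b, d], is at most the number of lattice points in the triangle conv{a, b, d}. -/
lemma mem_convexHull_triple {A B C x : Fin 2 → ℝ} :
    x ∈ convexHull ℝ {A, B, C} ↔
      ∃ α β γ : ℝ, 0 ≤ α ∧ 0 ≤ β ∧ 0 ≤ γ ∧ α + β + γ = 1 ∧ α • A + β • B + γ • C = x := by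
  constructor
  · intro h
    rw [convexHull_insert (by simp), convexHull_pair] at h
    obtain ⟨y, ⟨p, q, hp, hq, hpq, rfl⟩, u, v, hu, hv, huv, rfl⟩ := by
      simpa [mem_convexJoin] using h
    refine ⟨u, v * p, v * q, hu, by positivity, by positivity, ?_, ?_⟩
    · linear_combination huv + v * hpq
    · module
  · rintro ⟨α, β, γ, hα, hβ, hγ, h, rfl⟩
    have hc := convex_convexHull ℝ ({A, B, C} : Set (Fin 2 → ℝ))
    have hsub := subset_convexHull ℝ ({A, B, C} : Set (Fin 2 → ℝ))
    have := hc.sum_mem (t := Finset.univ) (w := ![α, β, γ]) (z := ![A, B, C])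
      (by intro i _; fin_cases i <;> simpa)
      (by simpa [Fin.sum_univ_three] using h)
      (by intro i _; fin_cases i <;> exact hsub (by simp))
    simpa [Fin.sum_univ_three] using this

/-- Barycentric coordinates with respect to affinely independent points are unique. -/
lemma barycentric_unique {A B C : Fin 2 → ℝ} (h : AffineIndependent ℝ ![A, B, C])
    {α β γ α' β' γ' : ℝ} (h1 : α + β + γ = 1) (h1' : α' + β' + γ' = 1)
    (he : α • A + β • B + γ • C = α' • A + β' • B + γ' • C) :
    β = β' ∧ γ = γ' := by
  rw [affineIndependent_iff] at h
  have key := h Finset.univ ![α - α', β - β', γ - γ']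
    (by simp [Fin.sum_univ_three]; linarith)
    (by
      simp only [Fin.sum_univ_three, Matrix.cons_val]
      rw [← sub_eq_zero] at he
      rw [← he]
      module)
  have hβ := key 1 (Finset.mem_univ _)
  have hγ := key 2 (Finset.mem_univ _)
  simp at hβ hγ
  exact ⟨by linarith, by linarith⟩

lemma latticeEmb_add_sub (a d x : Fin 2 → ℤ) :
    latticeEmb (a + d - x) = latticeEmb a + latticeEmb d - latticeEmb x := by
  ext i; simp [latticeEmb]

lemma finite_lattice_triangle (A B C : Fin 2 → ℝ) :
    {x : Fin 2 → ℤ | latticeEmb x ∈ convexHull ℝ {A, B, C}}.Finite := by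
  have hb : Bornology.IsBounded (convexHull ℝ ({A, B, C} : Set (Fin 2 → ℝ))) :=
    isBounded_convexHull.2 (Set.toFinite _).isBounded
  obtain ⟨R, hR⟩ := hb.exists_norm_le
  refine (Set.Finite.pi' (fun _ : Fin 2 => Set.finite_Icc (-⌈R⌉) ⌈R⌉)).subset ?_
  intro x hx i
  have h1 : |(x i : ℝ)| ≤ R := (norm_le_pi_norm (latticeEmb x) i).trans (hR _ hx)
  have h2 := abs_le.1 (h1.trans (Int.le_ceil R))
  exact ⟨by exact_mod_cast h2.1, by exact_mod_cast h2.2⟩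

/-- Let `a, b, d ∈ ℤ²` be affinely independent and let `e, f ∈ ℝ²` with
`f − e = s·(b − a)` for some `0 ≤ s < 1` and `d = (1−t)·e + t·f` for some `0 ≤ t ≤ 1`.
Then the number of lattice points in `conv{a, d, e}` not on the segment `[a, d]`, plus the
number of lattice points in `conv{b, d, f}` not on the segment `[b, d]`, is at most the
number of lattice points in the triangle `conv{a, b, d}`. -/
theorem stmt_6 (a b d : Fin 2 → ℤ) (e f : Fin 2 → ℝ) (s t : ℝ)
    (hind : AffineIndependent ℝ ![latticeEmb a, latticeEmb b, latticeEmb d])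
    (hs0 : 0 ≤ s) (hs1 : s < 1) (hef : f - e = s • (latticeEmb b - latticeEmb a))
    (ht0 : 0 ≤ t) (ht1 : t ≤ 1) (hd : latticeEmb d = (1 - t) • e + t • f) :
    {x : Fin 2 → ℤ | latticeEmb x ∈ convexHull ℝ {latticeEmb a, latticeEmb d, e} ∧
        latticeEmb x ∉ segment ℝ (latticeEmb a) (latticeEmb d)}.ncard +
    {x : Fin 2 → ℤ | latticeEmb x ∈ convexHull ℝ {latticeEmb b, latticeEmb d, f} ∧
        latticeEmb x ∉ segment ℝ (latticeEmb b) (latticeEmb d)}.ncard ≤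
    {x : Fin 2 → ℤ |
        latticeEmb x ∈ convexHull ℝ {latticeEmb a, latticeEmb b, latticeEmb d}}.ncard := by
  set A := latticeEmb a with hA
  set B := latticeEmb b with hB
  set D := latticeEmb d with hD
  have he : e = D - (t * s) • (B - A) := by
    rw [hd, mul_smul, ← hef]; module
  have hf : f = D + ((1 - t) * s) • (B - A) := by
    rw [hd, mul_smul, ← hef]; module
  have hts : t * s ≤ 1 := mul_le_one₀ ht1 hs0 hs1.le
  have hts' : (1 - t) * s ≤ 1 := mul_le_one₀ (by linarith) hs0 hs1.le
  have hp : 0 ≤ t * s := mul_nonneg ht0 hs0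
  have hp' : 0 ≤ (1 - t) * s := mul_nonneg (by linarith) hs0
  set L := {x : Fin 2 → ℤ | latticeEmb x ∈ convexHull ℝ {A, D, e} ∧
    latticeEmb x ∉ segment ℝ A D}
  set R := {x : Fin 2 → ℤ | latticeEmb x ∈ convexHull ℝ {B, D, f} ∧
    latticeEmb x ∉ segment ℝ B D}
  set T := {x : Fin 2 → ℤ | latticeEmb x ∈ convexHull ℝ {A, B, D}}
  have hT : T.Finite := finite_lattice_triangle A B D
  have hLT : (fun x => a + d - x) '' L ⊆ T := by
    rintro _ ⟨x, ⟨hx, -⟩, rfl⟩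
    obtain ⟨α, β, γ, hα, hβ, hγ, h, hx⟩ := mem_convexHull_triple.1 hx
    refine mem_convexHull_triple.2
      ⟨β + γ * (1 - t * s), γ * (t * s), α, ?_, by positivity, hα, by linarith, ?_⟩
    · have := mul_nonneg hγ (sub_nonneg.2 hts)
      linarith
    · rw [latticeEmb_add_sub, ← hx, he]
      obtain rfl : α = 1 - β - γ := by linarith
      module
  have hRT : (fun x => b + d - x) '' R ⊆ T := by
    rintro _ ⟨x, ⟨hx, -⟩, rfl⟩
    obtain ⟨α, β, γ, hα, hβ, hγ, h, hx⟩ := mem_convexHull_triple.1 hx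
    refine mem_convexHull_triple.2
      ⟨γ * ((1 - t) * s), β + γ * (1 - (1 - t) * s), α, by positivity, ?_, hα, by linarith, ?_⟩
    · have := mul_nonneg hγ (sub_nonneg.2 hts')
      linarith
    · rw [latticeEmb_add_sub, ← hx, hf]
      obtain rfl : α = 1 - β - γ := by linarith
      module
  have hdisj : Disjoint ((fun x => a + d - x) '' L) ((fun x => b + d - x) '' R) := by
    rw [Set.disjoint_left]
    rintro _ ⟨x, ⟨hx, hxs⟩, rfl⟩ ⟨y, ⟨hy, -⟩, hyx⟩
    obtain ⟨α, β, γ, hα, hβ, hγ, h, hx⟩ := mem_convexHull_triple.1 hx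
    obtain ⟨α', β', γ', hα', hβ', hγ', h', hy⟩ := mem_convexHull_triple.1 hy
    have hyx' : B + D - latticeEmb y = A + D - latticeEmb x := by
      rw [← latticeEmb_add_sub, ← latticeEmb_add_sub]
      exact congrArg latticeEmb hyx
    obtain ⟨h1, h2⟩ := barycentric_unique hind
      (α := β + γ * (1 - t * s)) (β := γ * (t * s)) (γ := α)
      (α' := γ' * ((1 - t) * s)) (β' := β' + γ' * (1 - (1 - t) * s)) (γ' := α')
      (by linarith) (by linarith) (by
        trans A + D - latticeEmb x
        · rw [← hx, he]
          obtain rfl : α = 1 - β - γ := by linarith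
          module
        · rw [← hyx', ← hy, hf]
          obtain rfl : α' = 1 - β' - γ' := by linarith
          module)
    -- The two widths fill the whole slice at height `α`, yet amount to at most `s * (1 - α)`.
    have h3 : 1 - α ≤ s * (1 - α) := by
      have e1 : γ * (t * s) ≤ (1 - α) * (t * s) := by gcongr; linarith
      have e2 : γ' * ((1 - t) * s) ≤ (1 - α) * ((1 - t) * s) := by gcongr; linarith
      linarith
    have hα1 : 1 ≤ α := by
      by_contra hlt
      nlinarith
    have hβ0 : β = 0 := by linarith
    have hγ0 : γ = 0 := by linarith
    have hα' : α = 1 := by linarith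
    apply hxs
    rw [← hx, hβ0, hγ0, hα']
    simpa using left_mem_segment ℝ A D
  rw [← Set.ncard_image_of_injective L (f := fun x => a + d - x) sub_right_injective,
    ← Set.ncard_image_of_injective R (f := fun x => b + d - x) sub_right_injective,
    ← Set.ncard_union_eq hdisj (hT.subset hLT) (hT.subset hRT)]
  exact Set.ncard_le_ncard (Set.union_subset hLT hRT) hT
end

section
/- Let a, b, d ∈ ℝ² be affinely independent and let e, f ∈ ℝ² satisfy f − e = s·(b − a) for some real s with 0 ≤ s ≤ 1, and d = (1 − t)·e + t·f for some real t with 0 ≤ t ≤ 1. Then the intersection of the preserved triangle conv{a, d, e} with the discarded triangle conv{a, b, d} is contained in the segment [a, d]. -/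
/-!
Since `d - e = t • (f - e) = (t * s) • (b - a)`, the point `e` is `d - (t * s) • (b - a)`.
Hence, in barycentric coordinates with respect to `a, b, d`, every point of `conv {a, d, e}` has
a nonpositive `b`-coordinate, whereas every point of `conv {a, b, d}` has nonnegative coordinates.
By uniqueness of barycentric coordinates, a common point has `b`-coordinate zero, and so is a
convex combination of `a` and `d`.
-/

theorem exists_weights_of_mem_convexHull_triple {x y z p : Fin 2 → ℝ}
    (hp : p ∈ convexHull ℝ {x, y, z}) :
    ∃ u v w : ℝ, 0 ≤ u ∧ 0 ≤ v ∧ 0 ≤ w ∧ u + v + w = 1 ∧ p = u • x + v • y + w • z := by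
  rw [convexHull_insert (by simp), convexHull_pair] at hp
  simp only [convexJoin_singleton_left, Set.mem_iUnion] at hp
  obtain ⟨q, ⟨α, β, hα, hβ, hαβ, rfl⟩, γ, δ, hγ, hδ, hγδ, rfl⟩ := hp
  refine ⟨γ, δ * α, δ * β, hγ, by positivity, by positivity, ?_, ?_⟩
  · linear_combination hγδ + δ * hαβ
  · module

/-- Let `a, b, d ∈ ℝ²` be affinely independent and let `e, f ∈ ℝ²` with
`f − e = s·(b − a)` for some `0 ≤ s ≤ 1` and `d = (1−t)·e + t·f` for some `0 ≤ t ≤ 1`.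
Then the intersection of the preserved triangle `conv{a, d, e}` with the discarded
triangle `conv{a, b, d}` is contained in the segment `[a, d]`. -/
theorem stmt_7 (a b d e f : Fin 2 → ℝ) (s t : ℝ)
    (hind : AffineIndependent ℝ ![a, b, d])
    (hs0 : 0 ≤ s) (hs1 : s ≤ 1) (hef : f - e = s • (b - a))
    (ht0 : 0 ≤ t) (ht1 : t ≤ 1) (hd : d = (1 - t) • e + t • f) :
    convexHull ℝ {a, d, e} ∩ convexHull ℝ {a, b, d} ⊆ segment ℝ a d := by
  rintro x ⟨hx₁, hx₂⟩
  obtain ⟨p, q, r, hp, hq, hr, hsum, hx⟩ := exists_weights_of_mem_convexHull_triple hx₁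
  obtain ⟨p', q', r', hp', hq', hr', hsum', hx'⟩ := exists_weights_of_mem_convexHull_triple hx₂
  have he : e = d - (t * s) • (b - a) := by
    linear_combination (norm := module) -hd - t • hef
  -- The difference of the two barycentric expansions of `x` with respect to `a, b, d`.
  have hw := (affineIndependent_iff.1 hind) Finset.univ
    ![p + r * (t * s) - p', -(r * (t * s)) - q', q + r - r']
    (by simp [Fin.sum_univ_three]; linarith)
    (by
      simp only [Fin.sum_univ_three, Matrix.cons_val]
      rw [he] at hx
      linear_combination (norm := module) hx' - hx)
  have hb : -(r * (t * s)) - q' = 0 := hw 1 (Finset.mem_univ _)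
  have hq0 : q' = 0 := by
    have : 0 ≤ r * (t * s) := by positivity
    linarith
  refine ⟨p', r', hp', hr', by linarith, ?_⟩
  rw [hx', hq0]
  module
end

section
/- For every positive integer k, the set S = {(0,0), (1,2k)} ⊆ ℤ² satisfies |S′| ≥ 2k, where S′ = { x ∈ ℤ² : there exists y ∈ conv(S) with |x₁ − y₁| ≤ 1/2 and |x₂ − y₂| ≤ 1/2 }. In particular |S′| / |S| ≥ k, so the ratio |S′| / |S| is unbounded over finite sets S ⊆ ℤ². -/
/-- For every positive integer `k`, the set `S = {(0,0), (1,2k)} ⊆ ℤ²` satisfies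
`|S′| ≥ 2k`, where `S′` is the set of lattice points `x` whose unit square
`x + [−1/2, 1/2]²` meets `conv(S)`. In particular `|S′|/|S| ≥ k`, so the ratio
`|S′|/|S|` is unbounded over finite sets `S ⊆ ℤ²`. -/
theorem stmt_11 (k : ℕ) (hk : 0 < k)
    (S : Set (Fin 2 → ℤ)) (hS : S = {![0, 0], ![1, 2 * (k : ℤ)]})
    (S' : Set (Fin 2 → ℤ))
    (hS' : S' = {x : Fin 2 → ℤ |
      ∃ y ∈ convexHull ℝ (latticeEmb '' S), ∀ i, |(x i : ℝ) - y i| ≤ 1/2}) :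
    2 * k ≤ S'.ncard ∧ k * S.ncard ≤ S'.ncard := by
  have hconv : ∀ y ∈ convexHull ℝ (latticeEmb '' S),
      0 ≤ y 0 ∧ y 0 ≤ 1 ∧ 0 ≤ y 1 ∧ y 1 ≤ 2 * k := by
    intro y hy
    rw [hS, Set.image_pair, convexHull_pair] at hy
    obtain ⟨a, b, ha, hb, hab, rfl⟩ := hy
    have hk0 : (0 : ℝ) ≤ k := Nat.cast_nonneg k
    simp only [latticeEmb, Pi.add_apply, Pi.smul_apply, smul_eq_mul, Matrix.cons_val_zero,
      Matrix.cons_val_one]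
    push_cast
    refine ⟨by linarith, by linarith, by positivity, by nlinarith⟩
  -- `Set.ncard` of an infinite set is `0`, so finiteness of `S'` is needed for the lower bound.
  have hfin : S'.Finite := by
    refine (Set.finite_Icc (![-1, -1] : Fin 2 → ℤ) ![2, 2 * k + 1]).subset ?_
    rw [hS']
    rintro x ⟨y, hy, hxy⟩
    obtain ⟨h1, h2, h3, h4⟩ := hconv y hy
    have hx0 := abs_le.mp (hxy 0)
    have hx1 := abs_le.mp (hxy 1)
    have e1 : -1 ≤ x 0 := by
      have : (-1 : ℝ) ≤ x 0 := by linarith [hx0.1]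
      exact_mod_cast this
    have e2 : x 0 ≤ 2 := by
      have : (x 0 : ℝ) ≤ 2 := by linarith [hx0.2]
      exact_mod_cast this
    have e3 : -1 ≤ x 1 := by
      have : (-1 : ℝ) ≤ x 1 := by linarith [hx1.1]
      exact_mod_cast this
    have e4 : x 1 ≤ 2 * k + 1 := by
      have : (x 1 : ℝ) ≤ 2 * k + 1 := by linarith [hx1.2]
      exact_mod_cast this
    constructor <;> intro i <;> fin_cases i <;> simpa
  let f : ℕ → (Fin 2 → ℤ) := fun j => ![if j ≤ k then 0 else 1, (j : ℤ)]
  have hf : Function.Injective f := by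
    intro a b h
    have := congrFun h 1
    simpa [f] using this
  have hsub : f '' (Finset.range (2 * k) : Set ℕ) ⊆ S' := by
    rintro _ ⟨j, hj, rfl⟩
    have hj' : (j : ℝ) ≤ 2 * k := by
      have : j < 2 * k := by simpa using hj
      exact_mod_cast this.le
    have hk0 : (0 : ℝ) < k := Nat.cast_pos.mpr hk
    have hj0 : (0 : ℝ) ≤ j := Nat.cast_nonneg j
    have ht1 : (j : ℝ) / (2 * k) ≤ 1 := (div_le_one (by positivity)).mpr hj'
    have ht0 : (0 : ℝ) ≤ (j : ℝ) / (2 * k) := by positivity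
    -- The witness `y` is the point of the segment at height `j`.
    rw [hS']
    refine ⟨![(j : ℝ) / (2 * k), j], ?_, ?_⟩
    · rw [hS, Set.image_pair, convexHull_pair]
      refine ⟨1 - (j : ℝ) / (2 * k), (j : ℝ) / (2 * k), by linarith, ht0, by ring, ?_⟩
      ext i
      fin_cases i
      · simp [latticeEmb]
      · simp [latticeEmb]
        field_simp
    · intro i
      fin_cases i
      · by_cases hjk : j ≤ k
        · have hjk' : (j : ℝ) ≤ k := by exact_mod_cast hjk
          have : (j : ℝ) / (2 * k) ≤ 1 / 2 := by
            rw [div_le_iff₀ (by positivity)]; linarith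
          simp only [f, hjk, Fin.zero_eta, Matrix.cons_val_zero, if_true, Int.cast_zero]
          rw [abs_le]
          constructor <;> linarith
        · have hjk' : (k : ℝ) ≤ j := by exact_mod_cast (not_le.mp hjk).le
          have : 1 / 2 ≤ (j : ℝ) / (2 * k) := by
            rw [le_div_iff₀ (by positivity)]; linarith
          simp only [f, hjk, Fin.zero_eta, Matrix.cons_val_zero, if_false, Int.cast_one]
          rw [abs_le]
          constructor <;> linarith
      · simp [f]
  have hmain : 2 * k ≤ S'.ncard := by
    have h := Set.ncard_le_ncard hsub hfin
    rwa [Set.ncard_image_of_injective _ hf, Set.ncard_coe_finset, Finset.card_range] at h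
  refine ⟨hmain, ?_⟩
  have hS2 : S.ncard ≤ 2 := by
    rw [hS]
    exact (Set.ncard_insert_le _ _).trans (by rw [Set.ncard_singleton])
  calc k * S.ncard ≤ k * 2 := Nat.mul_le_mul_left k hS2
    _ = 2 * k := Nat.mul_comm k 2
    _ ≤ S'.ncard := hmain
end
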